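/- Let $\varphi$ be a Schwartz function on $\mathbb{R}^n$ and $s \in (0,2)$. Then the fractional Laplacian $\Lambda^s \varphi(x) = c_{s,n} \, \mathrm{p.v.} \int_{\mathbb{R}^n} \frac{\varphi(x) - \varphi(y)}{|x-y|^{n+s}} \, dy$ satisfies the pointwise decay bound $|\Lambda^s \varphi(x)| \leq C(\varphi, s, n) (1+|x|)^{-(n+s)}$ for all $x \in \mathbb{R}^n$. -/

import Mathlib

open MeasureTheory Metric ENNReal Filter Set

/-!
Averaging the principal value over `y = x + z` and `y = x - z` replaces `φ x - φ y` by half the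
second difference `D x z = 2 φ x - φ (x + z) - φ (x - z)`, which makes the integral absolutely
convergent at `z = 0`.

Put `r = n + s`. When `|z| ≤ (1 + |x|) / 2`, the second derivative of `φ` on the ball of radius
`|z|` around `x` is `O((1 + |x|) ^ (-(r + 2)))`, so `D x z = O((1 + |x|) ^ (-r) min 1 |z|²)`.
When `|z| ≥ (1 + |x|) / 2`, the factor `(1 + |x|) ^ (-r)` comes from the decay of `φ x` in the term
`2 φ x`, and from the kernel `|z| ^ (-r)` in the terms `φ (x ± z)`, which are integrable in `z`.
-/

open Module (finrank)
open scoped SchwartzMap Topology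

lemma rpow_neg_le_two_rpow_mul_of_half_le {a b r : ℝ} (ha : 0 < a) (hab : a / 2 ≤ b)
    (hr : 0 ≤ r) : b ^ (-r) ≤ 2 ^ r * a ^ (-r) :=
  calc b ^ (-r) ≤ (a / 2) ^ (-r) :=
        Real.rpow_le_rpow_of_nonpos (by positivity) hab (neg_nonpos.2 hr)
    _ = 2 ^ r * a ^ (-r) := by
        rw [Real.div_rpow ha.le zero_le_two, Real.rpow_neg zero_le_two, div_inv_eq_mul, mul_comm]

/-- The symmetric second difference of `f` at `x` with step `z`, that is
`2 f x - f (x + z) - f (x - z)`, grouped as the sum of the two increments. -/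
def secondDiff {E F : Type*} [AddCommGroup E] [AddCommGroup F] (f : E → F) (x z : E) : F :=
  (f x - f (x + z)) + (f x - f (x - z))

lemma norm_secondDiff_le {E F : Type*} [AddCommGroup E] [NormedAddCommGroup F] (f : E → F)
    (x z : E) :
    ‖secondDiff f x z‖ ≤ 2 * ‖f x‖ + (‖f (x + z)‖ + ‖f (x - z)‖) :=
  calc ‖secondDiff f x z‖ ≤ ‖f x - f (x + z)‖ + ‖f x - f (x - z)‖ := norm_add_le _ _
    _ ≤ (‖f x‖ + ‖f (x + z)‖) + (‖f x‖ + ‖f (x - z)‖) :=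
        add_le_add (norm_sub_le _ _) (norm_sub_le _ _)
    _ = 2 * ‖f x‖ + (‖f (x + z)‖ + ‖f (x - z)‖) := by ring

/-- The density `min 1 |z|² · |z| ^ (-r)`, the singular kernel `|z| ^ (-r)` damped at the
origin as in the integrability condition for Lévy measures. -/
noncomputable def levyWeight {E : Type*} [Norm E] (r : ℝ) (z : E) : ℝ :=
  min 1 (‖z‖ ^ 2) * ‖z‖ ^ (-r)

lemma levyWeight_nonneg {E : Type*} [NormedAddCommGroup E] (r : ℝ) (z : E) :
    0 ≤ levyWeight r z := by
  unfold levyWeight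
  positivity

section Taylor

variable {E F : Type*} [NormedAddCommGroup E] [NormedSpace ℝ E]
  [NormedAddCommGroup F] [NormedSpace ℝ F]

lemma norm_sub_sub_fderiv_le_of_norm_iteratedFDeriv_two_le {f : E → F} {x z : E} {A : ℝ}
    (hf : ContDiff ℝ 2 f) (hA : ∀ w ∈ closedBall x ‖z‖, ‖iteratedFDeriv ℝ 2 f w‖ ≤ A) :
    ‖f (x + z) - f x - fderiv ℝ f x z‖ ≤ A * ‖z‖ ^ 2 := by
  have hball : Convex ℝ (closedBall x ‖z‖) := convex_closedBall x ‖z‖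
  have hx : x ∈ closedBall x ‖z‖ := mem_closedBall_self (norm_nonneg z)
  have hxz : x + z ∈ closedBall x ‖z‖ := by simp
  have hA0 : 0 ≤ A := (norm_nonneg _).trans (hA x hx)
  have hf' : Differentiable ℝ (fderiv ℝ f) :=
    (hf.fderiv_right (m := 1) (by norm_num)).differentiable one_ne_zero
  have hf'_sub (w : E) (hw : w ∈ closedBall x ‖z‖) :
      ‖fderiv ℝ f w - fderiv ℝ f x‖ ≤ A * ‖z‖ :=
    calc ‖fderiv ℝ f w - fderiv ℝ f x‖ ≤ A * ‖w - x‖ := by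
          refine hball.norm_image_sub_le_of_norm_fderiv_le (fun v _ => hf' v) (fun v hv => ?_) hx hw
          rw [← norm_iteratedFDeriv_one, norm_iteratedFDeriv_fderiv]
          exact hA v hv
      _ ≤ A * ‖z‖ := by gcongr; exact mem_closedBall_iff_norm.1 hw
  have htaylor := hball.norm_image_sub_le_of_norm_fderiv_le'
    (fun w _ => hf.differentiable two_ne_zero w) hf'_sub hx hxz
  rwa [add_sub_cancel_left, mul_assoc, ← sq] at htaylor

lemma norm_secondDiff_le_of_norm_iteratedFDeriv_two_le {f : E → F} {x z : E} {A : ℝ}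
    (hf : ContDiff ℝ 2 f) (hA : ∀ w ∈ closedBall x ‖z‖, ‖iteratedFDeriv ℝ 2 f w‖ ≤ A) :
    ‖secondDiff f x z‖ ≤ 2 * A * ‖z‖ ^ 2 := by
  have hpos := norm_sub_sub_fderiv_le_of_norm_iteratedFDeriv_two_le hf hA
  have hneg : ‖f (x + -z) - f x - fderiv ℝ f x (-z)‖ ≤ A * ‖-z‖ ^ 2 :=
    norm_sub_sub_fderiv_le_of_norm_iteratedFDeriv_two_le hf (by rwa [norm_neg])
  rw [norm_neg] at hneg
  calc ‖secondDiff f x z‖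
      = ‖(f (x + z) - f x - fderiv ℝ f x z) + (f (x + -z) - f x - fderiv ℝ f x (-z))‖ := by
        rw [← norm_neg, secondDiff, map_neg, ← sub_eq_add_neg x z]
        congr 1
        abel
    _ ≤ A * ‖z‖ ^ 2 + A * ‖z‖ ^ 2 := norm_add_le_of_le hpos hneg
    _ = 2 * A * ‖z‖ ^ 2 := by ring

end Taylor

section Schwartz

variable {E F : Type*} [NormedAddCommGroup E] [NormedSpace ℝ E]
  [NormedAddCommGroup F] [NormedSpace ℝ F]

lemma exists_norm_iteratedFDeriv_schwartz_le_rpow_neg (φ : 𝓢(E, F)) (k : ℕ) (r : ℝ) :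
    ∃ A, 0 ≤ A ∧ ∀ x, ‖iteratedFDeriv ℝ k φ x‖ ≤ A * (1 + ‖x‖) ^ (-r) := by
  obtain ⟨m, hm⟩ := exists_nat_ge r
  refine ⟨2 ^ m * (Finset.Iic (m, k)).sup (fun p => SchwartzMap.seminorm ℝ p.1 p.2) φ,
    by positivity, fun x => ?_⟩
  have hpow : (1 + ‖x‖) ^ r ≤ (1 + ‖x‖) ^ m := by
    rw [← Real.rpow_natCast]
    exact Real.rpow_le_rpow_of_exponent_le (by simp) hm
  rw [Real.rpow_neg (by positivity), ← div_eq_mul_inv, le_div_iff₀' (by positivity)]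
  calc (1 + ‖x‖) ^ r * ‖iteratedFDeriv ℝ k φ x‖
      ≤ (1 + ‖x‖) ^ m * ‖iteratedFDeriv ℝ k φ x‖ := by gcongr
    _ ≤ _ := SchwartzMap.one_add_le_sup_seminorm_apply (m := (m, k)) le_rfl le_rfl φ x

lemma exists_norm_schwartz_le_rpow_neg (φ : 𝓢(E, F)) (r : ℝ) :
    ∃ A, 0 ≤ A ∧ ∀ x, ‖φ x‖ ≤ A * (1 + ‖x‖) ^ (-r) := by
  simpa only [norm_iteratedFDeriv_zero] using exists_norm_iteratedFDeriv_schwartz_le_rpow_neg φ 0 r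

lemma exists_norm_secondDiff_schwartz_le_of_norm_le (φ : 𝓢(E, F)) {r : ℝ} (hr : 0 ≤ r) :
    ∃ A, ∀ x z : E, ‖z‖ ≤ (1 + ‖x‖) / 2 →
      ‖secondDiff φ x z‖ ≤ A * (1 + ‖x‖) ^ (-r) * min 1 (‖z‖ ^ 2) := by
  obtain ⟨B, hB0, hB⟩ := exists_norm_iteratedFDeriv_schwartz_le_rpow_neg φ 2 (r + 2)
  refine ⟨2 * (B * 2 ^ (r + 2)), fun x z hz => ?_⟩
  have hJ : 1 ≤ 1 + ‖x‖ := by simp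
  have hderiv (w : E) (hw : w ∈ closedBall x ‖z‖) :
      ‖iteratedFDeriv ℝ 2 φ w‖ ≤ B * (2 ^ (r + 2) * (1 + ‖x‖) ^ (-(r + 2))) := by
    have hxw : (1 + ‖x‖) / 2 ≤ 1 + ‖w‖ := by
      have := norm_le_norm_add_norm_sub' x w
      have := mem_closedBall_iff_norm'.1 hw
      linarith
    refine (hB w).trans (mul_le_mul_of_nonneg_left ?_ hB0)
    exact rpow_neg_le_two_rpow_mul_of_half_le (by positivity) hxw (by positivity)
  have hsq : ‖z‖ ^ 2 / (1 + ‖x‖) ^ 2 ≤ min 1 (‖z‖ ^ 2) := by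
    refine le_min ?_ (div_le_self (by positivity) (one_le_pow₀ hJ))
    rw [div_le_one (by positivity)]
    gcongr
    linarith
  calc ‖secondDiff φ x z‖ ≤ 2 * (B * (2 ^ (r + 2) * (1 + ‖x‖) ^ (-(r + 2)))) * ‖z‖ ^ 2 :=
        norm_secondDiff_le_of_norm_iteratedFDeriv_two_le (φ.smooth 2) hderiv
    _ = 2 * (B * 2 ^ (r + 2)) * (1 + ‖x‖) ^ (-r) * (‖z‖ ^ 2 / (1 + ‖x‖) ^ 2) := by
        rw [neg_add, Real.rpow_add (x := 1 + ‖x‖) (by positivity), Real.rpow_neg (y := 2)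
          (by positivity), Real.rpow_two]
        ring
    _ ≤ 2 * (B * 2 ^ (r + 2)) * (1 + ‖x‖) ^ (-r) * min 1 (‖z‖ ^ 2) := by gcongr

lemma exists_rpow_neg_mul_norm_secondDiff_schwartz_le_of_le_norm (φ : 𝓢(E, F)) {r : ℝ}
    (hr : 0 ≤ r) :
    ∃ B, ∀ x z : E, (1 + ‖x‖) / 2 ≤ ‖z‖ →
      ‖z‖ ^ (-r) * ‖secondDiff φ x z‖ ≤
        (1 + ‖x‖) ^ (-r) * (B * levyWeight r z + 2 ^ r * (‖φ (x + z)‖ + ‖φ (x - z)‖)) := by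
  obtain ⟨B, hB0, hB⟩ := exists_norm_schwartz_le_rpow_neg φ r
  refine ⟨8 * B, fun x z hz => ?_⟩
  have hkernel : ‖z‖ ^ (-r) ≤ 2 ^ r * (1 + ‖x‖) ^ (-r) :=
    rpow_neg_le_two_rpow_mul_of_half_le (by positivity) hz hr
  have hmin : 1 ≤ 4 * min 1 (‖z‖ ^ 2) := by
    have : 1 / 4 ≤ min 1 (‖z‖ ^ 2) :=
      le_min (by norm_num) (by nlinarith [norm_nonneg x])
    linarith
  calc ‖z‖ ^ (-r) * ‖secondDiff φ x z‖
      ≤ ‖z‖ ^ (-r) * (2 * ‖φ x‖ + (‖φ (x + z)‖ + ‖φ (x - z)‖)) := by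
        gcongr
        exact norm_secondDiff_le φ x z
    _ = ‖z‖ ^ (-r) * (2 * ‖φ x‖) * 1 + ‖z‖ ^ (-r) * (‖φ (x + z)‖ + ‖φ (x - z)‖) := by ring
    _ ≤ ‖z‖ ^ (-r) * (2 * (B * (1 + ‖x‖) ^ (-r))) * (4 * min 1 (‖z‖ ^ 2)) +
          2 ^ r * (1 + ‖x‖) ^ (-r) * (‖φ (x + z)‖ + ‖φ (x - z)‖) := by
        gcongr
        exact hB x
    _ = _ := by
        rw [levyWeight]
        ring

lemma exists_rpow_neg_mul_norm_secondDiff_schwartz_le (φ : 𝓢(E, F)) {r : ℝ} (hr : 0 ≤ r) :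
    ∃ K, 0 ≤ K ∧ ∀ x z : E, ‖z‖ ^ (-r) * ‖secondDiff φ x z‖ ≤
      (1 + ‖x‖) ^ (-r) * (K * (levyWeight r z + (‖φ (x + z)‖ + ‖φ (x - z)‖))) := by
  obtain ⟨A, hA⟩ := exists_norm_secondDiff_schwartz_le_of_norm_le φ hr
  obtain ⟨B, hB⟩ := exists_rpow_neg_mul_norm_secondDiff_schwartz_le_of_le_norm φ hr
  refine ⟨max A (max B (2 ^ r)), by positivity, fun x z => ?_⟩
  have hweight := levyWeight_nonneg r z
  rcases le_total ‖z‖ ((1 + ‖x‖) / 2) with hz | hz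
  · calc ‖z‖ ^ (-r) * ‖secondDiff φ x z‖
        ≤ ‖z‖ ^ (-r) * (A * (1 + ‖x‖) ^ (-r) * min 1 (‖z‖ ^ 2)) := by
          gcongr
          exact hA x z hz
      _ = (1 + ‖x‖) ^ (-r) * (A * (levyWeight r z + 0)) := by
          rw [levyWeight]
          ring
      _ ≤ _ := by
          gcongr
          · exact le_max_left _ _
          · positivity
  · calc ‖z‖ ^ (-r) * ‖secondDiff φ x z‖
        ≤ (1 + ‖x‖) ^ (-r) * (B * levyWeight r z + 2 ^ r * (‖φ (x + z)‖ + ‖φ (x - z)‖)) :=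
          hB x z hz
      _ ≤ _ := by
          rw [mul_add (max A _)]
          gcongr
          · exact (le_max_left _ _).trans (le_max_right _ _)
          · exact (le_max_right _ _).trans (le_max_right _ _)

end Schwartz

section Integrability

variable {E : Type*} [NormedAddCommGroup E] [NormedSpace ℝ E] [FiniteDimensional ℝ E]
  [MeasurableSpace E] [BorelSpace E] (μ : Measure E) [μ.IsAddHaarMeasure]

lemma integrableOn_rpow_neg_norm_of_le_norm {r ε : ℝ} (hr : finrank ℝ E < r) (hε : 0 < ε) :
    IntegrableOn (fun z : E => ‖z‖ ^ (-r)) {z | ε ≤ ‖z‖} μ := by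
  have hr0 : 0 ≤ r := (Nat.cast_nonneg _).trans hr.le
  refine ((integrable_one_add_norm hr).const_mul ((1 + ε⁻¹) ^ r)).integrableOn.mono'
    (measurable_norm.pow_const _).aestronglyMeasurable ?_
  filter_upwards [ae_restrict_mem (measurableSet_le measurable_const measurable_norm)] with z hz
  have hz0 : 0 < ‖z‖ := hε.trans_le hz
  have hle : (1 + ‖z‖) / (1 + ε⁻¹) ≤ ‖z‖ := by
    rw [div_le_iff₀ (by positivity), mul_add, mul_one, add_comm]
    gcongr
    rw [← div_eq_mul_inv]
    exact (one_le_div hε).2 hz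
  calc ‖‖z‖ ^ (-r)‖ = ‖z‖ ^ (-r) := Real.norm_of_nonneg (by positivity)
    _ ≤ ((1 + ‖z‖) / (1 + ε⁻¹)) ^ (-r) :=
        Real.rpow_le_rpow_of_nonpos (by positivity) hle (neg_nonpos.2 hr0)
    _ = (1 + ε⁻¹) ^ r * (1 + ‖z‖) ^ (-r) := by
        rw [Real.div_rpow (by positivity) (by positivity), Real.rpow_neg (x := 1 + ε⁻¹)
          (by positivity), div_inv_eq_mul, mul_comm]

lemma integrableOn_ball_levyWeight {r : ℝ} (hr : r < finrank ℝ E + 2) :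
    IntegrableOn (levyWeight r) (ball (0 : E) 1) μ := by
  rcases subsingleton_or_nontrivial E with _ | _
  · exact .of_subsingleton subsingleton_of_subsingleton
  refine integrableOn_ball_of_norm_le_rpow (C := 1) (α := r - 2) Module.finrank_pos
    (by linarith) ?_ (by unfold levyWeight; fun_prop)
  filter_upwards [compl_mem_ae_iff.2 (measure_singleton 0)] with z hz
  have hz0 : 0 < ‖z‖ := norm_pos_iff.2 hz
  calc ‖levyWeight r z‖ = min 1 (‖z‖ ^ 2) * ‖z‖ ^ (-r) :=
        Real.norm_of_nonneg (levyWeight_nonneg r z)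
    _ ≤ ‖z‖ ^ 2 * ‖z‖ ^ (-r) := by
        gcongr
        exact min_le_right _ _
    _ = 1 * ‖z‖ ^ (-(r - 2)) := by
        rw [← Real.rpow_two, ← Real.rpow_add hz0, one_mul]
        ring_nf

lemma integrable_levyWeight {r : ℝ} (hr : finrank ℝ E < r) (hr' : r < finrank ℝ E + 2) :
    Integrable (levyWeight r : E → ℝ) μ := by
  have hcover : ball (0 : E) 1 ∪ {z | 1 ≤ ‖z‖} = univ := by
    ext z
    simpa using lt_or_ge ‖z‖ 1
  rw [← integrableOn_univ, ← hcover]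
  refine (integrableOn_ball_levyWeight μ hr').union ?_
  refine (integrableOn_rpow_neg_norm_of_le_norm μ hr one_pos).mono'
    (by unfold levyWeight; fun_prop) (.of_forall fun z => ?_)
  rw [Real.norm_of_nonneg (levyWeight_nonneg r z)]
  exact mul_le_of_le_one_left (by positivity) (min_le_left _ _)

end Integrability

section Translates

variable {G F : Type*} [AddGroup G] [MeasurableSpace G] [MeasurableAdd G] [MeasurableNeg G]
  [NormedAddCommGroup F] (μ : Measure G) [μ.IsAddLeftInvariant] [μ.IsNegInvariant]

lemma integrable_add_left_add_sub_left {g : G → F} (hg : Integrable g μ)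
    (x : G) : Integrable (fun z => g (x + z) + g (x - z)) μ :=
  (hg.comp_add_left x).add (hg.comp_sub_left x)

lemma integral_add_left_add_sub_left [NormedSpace ℝ F] {g : G → F} (hg : Integrable g μ)
    (x : G) : ∫ z, (g (x + z) + g (x - z)) ∂μ = (2 : ℝ) • ∫ y, g y ∂μ := by
  rw [integral_add (hg.comp_add_left x) (hg.comp_sub_left x), integral_add_left_eq_self,
    integral_sub_left_eq_self, two_smul]

end Translates

/-- The singular integral `∫ (f x - f y) / |x - y| ^ r dy` restricted to `|x - y| ≥ ε`. Its limit as
`ε → 0⁺` is the principal value, which for `r = dim E + s` is the fractional Laplacian `Λ^s f x` up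
to the normalizing constant. -/
noncomputable def truncatedSingularIntegral {E F : Type*} [PseudoMetricSpace E] [MeasurableSpace E]
    [NormedAddCommGroup F] [NormedSpace ℝ F] (μ : Measure E) (r ε : ℝ) (f : E → F) (x : E) : F :=
  ∫ y in {y | ε ≤ dist x y}, (dist x y ^ r)⁻¹ • (f x - f y) ∂μ

section ChangeOfVariables

variable {E F : Type*} [NormedAddCommGroup E] [MeasurableSpace E] [BorelSpace E]
  [NormedAddCommGroup F] [NormedSpace ℝ F] (μ : Measure E) [μ.IsAddLeftInvariant]

lemma truncatedSingularIntegral_eq_setIntegral_add (r ε : ℝ) (f : E → F) (x : E) :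
    truncatedSingularIntegral μ r ε f x =
      ∫ z in {z | ε ≤ ‖z‖}, ‖z‖ ^ (-r) • (f x - f (x + z)) ∂μ := by
  rw [truncatedSingularIntegral, ← (measurePreserving_add_left μ x).setIntegral_preimage_emb
    (measurableEmbedding_addLeft x)]
  simp only [preimage_ofPred_eq, dist_self_add_right, Real.rpow_neg (norm_nonneg _)]

lemma truncatedSingularIntegral_eq_setIntegral_sub [μ.IsNegInvariant] (r ε : ℝ) (f : E → F)
    (x : E) :
    truncatedSingularIntegral μ r ε f x =
      ∫ z in {z | ε ≤ ‖z‖}, ‖z‖ ^ (-r) • (f x - f (x - z)) ∂μ := by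
  rw [truncatedSingularIntegral_eq_setIntegral_add,
    ← (Measure.measurePreserving_neg μ).setIntegral_preimage_emb
      (MeasurableEquiv.neg E).measurableEmbedding]
  simp only [preimage_ofPred_eq, norm_neg, sub_eq_add_neg]

end ChangeOfVariables

section TruncatedSingularIntegral

variable {E F : Type*} [NormedAddCommGroup E] [NormedSpace ℝ E] [FiniteDimensional ℝ E]
  [MeasurableSpace E] [BorelSpace E] [NormedAddCommGroup F] [NormedSpace ℝ F]
  (μ : Measure E) [μ.IsAddHaarMeasure]

lemma integrableOn_rpow_neg_norm_smul_sub {r ε : ℝ} (hr : finrank ℝ E < r) (hε : 0 < ε)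
    {g : E → F} (hg : Integrable g μ) (v : F) :
    IntegrableOn (fun z => ‖z‖ ^ (-r) • (v - g z)) {z | ε ≤ ‖z‖} μ := by
  have hr0 : 0 ≤ r := (Nat.cast_nonneg _).trans hr.le
  simp only [smul_sub]
  refine ((integrableOn_rpow_neg_norm_of_le_norm μ hr hε).smul_const v).sub
    (hg.integrableOn.bdd_smul (ε ^ (-r)) (measurable_norm.pow_const _).aestronglyMeasurable ?_)
  filter_upwards [ae_restrict_mem (measurableSet_le measurable_const measurable_norm)] with z hz
  rw [Real.norm_of_nonneg (by positivity)]
  exact Real.rpow_le_rpow_of_nonpos hε hz (neg_nonpos.2 hr0)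

lemma two_smul_truncatedSingularIntegral {r ε : ℝ} (hr : finrank ℝ E < r) (hε : 0 < ε)
    {f : E → F} (hf : Integrable f μ) (x : E) :
    (2 : ℝ) • truncatedSingularIntegral μ r ε f x =
      ∫ z in {z | ε ≤ ‖z‖}, ‖z‖ ^ (-r) • secondDiff f x z ∂μ := by
  simp only [secondDiff, smul_add]
  rw [integral_add (integrableOn_rpow_neg_norm_smul_sub μ hr hε (hf.comp_add_left x) _)
      (integrableOn_rpow_neg_norm_smul_sub μ hr hε (hf.comp_sub_left x) _),
    ← truncatedSingularIntegral_eq_setIntegral_add,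
    ← truncatedSingularIntegral_eq_setIntegral_sub, two_smul]

lemma exists_norm_truncatedSingularIntegral_schwartz_le {r : ℝ} (hr : finrank ℝ E < r)
    (hr' : r < finrank ℝ E + 2) (φ : 𝓢(E, F)) :
    ∃ C, 0 ≤ C ∧ ∀ ε > 0, ∀ x,
      ‖truncatedSingularIntegral μ r ε φ x‖ ≤ C * (1 + ‖x‖) ^ (-r) := by
  have hr0 : 0 ≤ r := (Nat.cast_nonneg _).trans hr.le
  obtain ⟨K, hK0, hK⟩ := exists_rpow_neg_mul_norm_secondDiff_schwartz_le φ hr0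
  have hweight := integrable_levyWeight μ hr hr'
  have hweight0 : 0 ≤ ∫ z, levyWeight r z ∂μ := integral_nonneg (levyWeight_nonneg r)
  refine ⟨K * ((∫ z, levyWeight r z ∂μ) + 2 * ∫ y, ‖φ y‖ ∂μ), by positivity, fun ε hε x => ?_⟩
  have htranslates := integrable_add_left_add_sub_left μ φ.integrable.norm x
  set bound : E → ℝ := fun z =>
    (1 + ‖x‖) ^ (-r) * (K * (levyWeight r z + (‖φ (x + z)‖ + ‖φ (x - z)‖)))
  have hbound : Integrable bound μ := ((hweight.add htranslates).const_mul K).const_mul _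
  have hbound0 (z : E) : 0 ≤ bound z := by
    have := levyWeight_nonneg r z
    positivity
  calc ‖truncatedSingularIntegral μ r ε φ x‖
      ≤ ‖(2 : ℝ) • truncatedSingularIntegral μ r ε φ x‖ := by
        rw [norm_smul, Real.norm_two]
        linarith [norm_nonneg (truncatedSingularIntegral μ r ε φ x)]
    _ = ‖∫ z in {z | ε ≤ ‖z‖}, ‖z‖ ^ (-r) • secondDiff φ x z ∂μ‖ := by
        rw [two_smul_truncatedSingularIntegral μ hr hε φ.integrable]
    _ ≤ ∫ z in {z | ε ≤ ‖z‖}, bound z ∂μ := by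
        refine norm_integral_le_of_norm_le hbound.integrableOn (.of_forall fun z => ?_)
        rw [norm_smul, Real.norm_of_nonneg (by positivity)]
        exact hK x z
    _ ≤ ∫ z, bound z ∂μ := setIntegral_le_integral hbound (.of_forall hbound0)
    _ = _ := by
        rw [integral_const_mul, integral_const_mul, integral_add hweight htranslates,
          integral_add_left_add_sub_left μ φ.integrable.norm, smul_eq_mul]
        ring

end TruncatedSingularIntegral

theorem stmt5_general {E F : Type*} [NormedAddCommGroup E] [NormedSpace ℝ E]
    [FiniteDimensional ℝ E] [MeasurableSpace E] [BorelSpace E]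
    [NormedAddCommGroup F] [NormedSpace ℝ F] [CompleteSpace F]
    (μ : Measure E) [μ.IsAddHaarMeasure] {s : ℝ} (hs0 : 0 < s) (hs2 : s < 2) (c : ℝ)
    (φ : 𝓢(E, F)) {L : E → F}
    (hL : ∀ x, Tendsto (fun ε => c • truncatedSingularIntegral μ (finrank ℝ E + s) ε φ x)
      (𝓝[>] 0) (𝓝 (L x))) :
    ∃ C, 0 < C ∧ ∀ x, ‖L x‖ ≤ C * (1 + ‖x‖) ^ (-(finrank ℝ E + s)) := by
  obtain ⟨C, hC0, hC⟩ := exists_norm_truncatedSingularIntegral_schwartz_le μ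
    (r := finrank ℝ E + s) (by linarith) (by linarith) φ
  refine ⟨|c| * C + 1, by positivity, fun x => le_of_tendsto (hL x).norm ?_⟩
  filter_upwards [self_mem_nhdsWithin] with ε hε
  calc ‖c • truncatedSingularIntegral μ (finrank ℝ E + s) ε φ x‖
      ≤ |c| * (C * (1 + ‖x‖) ^ (-(finrank ℝ E + s))) := by
        rw [norm_smul, Real.norm_eq_abs]
        gcongr
        exact hC ε hε x
    _ ≤ (|c| * C + 1) * (1 + ‖x‖) ^ (-(finrank ℝ E + s)) := by
        rw [← mul_assoc]
        gcongr
        linarith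

/-- if `φ` is Schwartz on `ℝⁿ`, `s ∈ (0,2)`, and `L = Λ^s φ` is the fractional
Laplacian, given by the principal value
`L x = lim_{ε → 0⁺} c ∫_{|x-y| ≥ ε} (φ(x) - φ(y)) / |x-y|^{n+s} dy`,
then `|L x| ≤ C(φ,s,n) (1+|x|)^{-(n+s)}` for all `x`. -/
theorem stmt5 (n : ℕ) (hn : 1 ≤ n) (s : ℝ) (hs0 : 0 < s) (hs2 : s < 2)
    (c : ℝ) (hc : 0 < c)
    (φ : SchwartzMap (EuclideanSpace ℝ (Fin n)) ℝ)
    (L : EuclideanSpace ℝ (Fin n) → ℝ)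
    (hL : ∀ x, Tendsto
      (fun ε : ℝ =>
        c * ∫ y in {y : EuclideanSpace ℝ (Fin n) | ε ≤ dist x y},
          (φ x - φ y) / dist x y ^ ((n : ℝ) + s))
      (nhdsWithin 0 (Set.Ioi 0)) (nhds (L x))) :
    ∃ C : ℝ, 0 < C ∧ ∀ x, |L x| ≤ C * (1 + ‖x‖) ^ (-((n : ℝ) + s)) := by
  simpa [truncatedSingularIntegral, div_eq_inv_mul] using
    stmt5_general volume hs0 hs2 c φ (L := L)
      (by simpa [truncatedSingularIntegral, div_eq_inv_mul] using hL)
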